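/- arXiv:1412.2681 — 9 statements merged into one kernel-verified Lean document; each statement's English description precedes it below -/
import Mathlib

section
/- Exact recovery of Cauchy points from the first row and column (correctness of Algorithm 1): let A = [a_{ij}] = C(s,t) ∈ ℂ^{m,n} be a Cauchy matrix. Define s' ∈ ℂ^m and t' ∈ ℂ^n by s'_1 = 0, t'_j = s'_1 − 1/a_{1j} for 1 ≤ j ≤ n, and s'_i = t'_1 + 1/a_{i1} for 2 ≤ i ≤ m. Then s', t' are Cauchy points and A = C(s',t'). -/
/-- Correctness of Algorithm 1 (exact recovery of Cauchy points from the first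
row and column): if `A = C(s,t)` is a Cauchy matrix and `s', t'` are defined by
`s'_1 = 0`, `t'_j = s'_1 − 1/a_{1j}`, and `s'_i = t'_1 + 1/a_{i1}` for `i ≥ 2`,
then `s', t'` are Cauchy points with `A = C(s',t')`. -/
theorem algorithm1_correct (m n : ℕ) (hm : 0 < m) (hn : 0 < n)
    (s : Fin m → ℂ) (t : Fin n → ℂ) (hst : ∀ i j, s i - t j ≠ 0)
    (A : Matrix (Fin m) (Fin n) ℂ) (hA : ∀ i j, A i j = (s i - t j)⁻¹)
    (s' : Fin m → ℂ) (t' : Fin n → ℂ)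
    (hs'0 : s' ⟨0, hm⟩ = 0)
    (ht' : ∀ j, t' j = s' ⟨0, hm⟩ - (A ⟨0, hm⟩ j)⁻¹)
    (hs' : ∀ i : Fin m, i ≠ ⟨0, hm⟩ → s' i = t' ⟨0, hn⟩ + (A i ⟨0, hn⟩)⁻¹) :
    (∀ i j, s' i - t' j ≠ 0) ∧ ∀ i j, A i j = (s' i - t' j)⁻¹ := by
  have key : ∀ i j, s' i - t' j = s i - t j := by
    intro i j
    by_cases h : i = ⟨0, hm⟩
    · subst h
      rw [ht' j, hA, inv_inv]
      ring
    · rw [hs' i h, ht' j, ht' ⟨0, hn⟩, hA, hA, hA, inv_inv, inv_inv, inv_inv]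
      ring
  refine ⟨fun i j => ?_, fun i j => ?_⟩
  · rw [key]
    exact hst i j
  · rw [key]
    exact hA i j
end

section
/- Eigenvector characterization of U Uᵀ (squares of the left singular vectors of U): (i) U Uᵀ 1_{mn} = (m+n)·1_{mn}; (ii) for every v ∈ ℂ^n with 1_nᵀ v = 0, U Uᵀ (1_m ⊗ v) = m·(1_m ⊗ v); (iii) for every v ∈ ℂ^m with 1_mᵀ v = 0, U Uᵀ (v ⊗ 1_n) = n·(v ⊗ 1_n). -/
open Matrix

/-- The matrix `U = [I_m ⊗ 1_n, −1_m ⊗ I_n]`: rows indexed by pairs `(i,j)`,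
columns by `Fin m ⊕ Fin n`, so that `(U z)_{(i,j)} = s_i − t_j` for `z = [s; t]`. -/
def Umat (m n : ℕ) : Matrix (Fin m × Fin n) (Fin m ⊕ Fin n) ℂ :=
  fun p => Sum.elim (fun k => if k = p.1 then 1 else 0) (fun l => if l = p.2 then -1 else 0)

theorem UUt_mulVec_aux (m n : ℕ) (w : Fin m × Fin n → ℂ) (p : Fin m × Fin n) :
    (Umat m n * (Umat m n)ᵀ).mulVec w p = (∑ l, w (p.1, l)) + ∑ k, w (k, p.2) := by
  have h : ∀ q : Fin m × Fin n, (Umat m n * (Umat m n)ᵀ) p q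
      = (if p.1 = q.1 then 1 else 0) + (if p.2 = q.2 then 1 else 0) := by
    intro q
    simp [Matrix.mul_apply, Umat, Fintype.sum_sum_type]
    by_cases h1 : p.1 = q.1 <;> by_cases h2 : p.2 = q.2 <;>
      simp [h1, h2, Ne.symm, eq_comm (a := q.1), eq_comm (a := q.2)]
  simp only [Matrix.mulVec, dotProduct, h, add_mul, Finset.sum_add_distrib]
  congr 1
  · rw [Fintype.sum_prod_type_right]
    simp
  · rw [Fintype.sum_prod_type]
    simp

/-- Eigenvector characterization of `U Uᵀ`:
(i) the all-ones vector `1_{mn}` is an eigenvector for eigenvalue `m+n`;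
(ii) `1_m ⊗ v` with `1_nᵀ v = 0` is an eigenvector for eigenvalue `m`;
(iii) `v ⊗ 1_n` with `1_mᵀ v = 0` is an eigenvector for eigenvalue `n`. -/
theorem eigen_UUt (m n : ℕ) (hm : 0 < m) (hn : 0 < n) :
    ((Umat m n * (Umat m n)ᵀ).mulVec (fun _ => 1) =
      ((m : ℂ) + n) • fun _ => (1 : ℂ)) ∧
    (∀ v : Fin n → ℂ, (∑ j, v j) = 0 →
      (Umat m n * (Umat m n)ᵀ).mulVec (fun p => v p.2) =
        (m : ℂ) • fun p : Fin m × Fin n => v p.2) ∧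
    (∀ v : Fin m → ℂ, (∑ i, v i) = 0 →
      (Umat m n * (Umat m n)ᵀ).mulVec (fun p => v p.1) =
        (n : ℂ) • fun p : Fin m × Fin n => v p.1) := by
  refine ⟨?_, ?_, ?_⟩
  · funext p
    rw [UUt_mulVec_aux]
    simp [add_comm]
  · intro v hv
    funext p
    rw [UUt_mulVec_aux]
    simp [hv]
  · intro v hv
    funext p
    rw [UUt_mulVec_aux]
    simp [hv]
end

section
/- The largest singular value of U equals √(m+n): for every z ∈ ℂ^{m+n} one has ‖Uz‖₂ ≤ √(m+n)·‖z‖₂, and there exists a nonzero z for which equality holds (e.g., z = [n·1_m; −m·1_n]). -/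
open Matrix

theorem Umat_mulVec_aux (m n : ℕ) (z : Fin m ⊕ Fin n → ℂ) (p : Fin m × Fin n) :
    (Umat m n).mulVec z p = z (Sum.inl p.1) - z (Sum.inr p.2) := by
  simp [Matrix.mulVec, dotProduct, Umat, Fintype.sum_sum_type, sub_eq_add_neg]

theorem real_aux (m n : ℕ) (a : Fin m → ℝ) (b : Fin n → ℝ) :
    ∑ p : Fin m × Fin n, (a p.1 - b p.2) ^ 2 ≤
      ((m : ℝ) + n) * (∑ i, a i ^ 2 + ∑ j, b j ^ 2) := by
  have h : ∑ p : Fin m × Fin n, (a p.1 - b p.2) ^ 2 =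
      n * ∑ i, a i ^ 2 - 2 * ((∑ i, a i) * ∑ j, b j) + m * ∑ j, b j ^ 2 := by
    rw [Fintype.sum_prod_type, Finset.sum_mul_sum]
    simp only [sub_sq, Finset.sum_add_distrib, Finset.sum_sub_distrib, Finset.sum_const,
      Finset.card_univ, Fintype.card_fin, nsmul_eq_mul, Finset.mul_sum, mul_assoc]
  have h1 := sq_sum_le_card_mul_sum_sq (s := Finset.univ) (f := a)
  have h2 := sq_sum_le_card_mul_sum_sq (s := Finset.univ) (f := b)
  simp only [Finset.card_univ, Fintype.card_fin] at h1 h2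
  rw [h]
  nlinarith [sq_nonneg (∑ i, a i + ∑ j, b j)]

/-- The largest singular value of `U` equals `√(m+n)`: `‖Uz‖₂ ≤ √(m+n)·‖z‖₂` for
all `z`, with equality attained by some nonzero `z`. -/
theorem largest_singular_value_U (m n : ℕ) (hm : 0 < m) (hn : 0 < n) :
    (∀ z : Fin m ⊕ Fin n → ℂ,
      Real.sqrt (∑ p, ‖(Umat m n).mulVec z p‖ ^ 2) ≤
        Real.sqrt (m + n) * Real.sqrt (∑ q, ‖z q‖ ^ 2)) ∧
    ∃ z : Fin m ⊕ Fin n → ℂ, z ≠ 0 ∧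
      Real.sqrt (∑ p, ‖(Umat m n).mulVec z p‖ ^ 2) =
        Real.sqrt (m + n) * Real.sqrt (∑ q, ‖z q‖ ^ 2) := by
  constructor
  · intro z
    rw [← Real.sqrt_mul (by positivity)]
    apply Real.sqrt_le_sqrt
    have h1 := real_aux m n (fun i => (z (Sum.inl i)).re) (fun j => (z (Sum.inr j)).re)
    have h2 := real_aux m n (fun i => (z (Sum.inl i)).im) (fun j => (z (Sum.inr j)).im)
    have e : ∀ w : ℂ, ‖w‖ ^ 2 = w.re ^ 2 + w.im ^ 2 := by
      intro w
      rw [Complex.sq_norm, Complex.normSq_apply]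
      ring
    simp only [Umat_mulVec_aux, e, Fintype.sum_sum_type, Finset.sum_add_distrib,
      Complex.sub_re, Complex.sub_im]
    linarith
  · refine ⟨Sum.elim (fun _ => (n : ℂ)) (fun _ => -(m : ℂ)), ?_, ?_⟩
    · intro h
      have := congrFun h (Sum.inl ⟨0, hm⟩)
      simp at this
      omega
    · rw [← Real.sqrt_mul (by positivity)]
      congr 1
      have e : ‖(n : ℂ) + m‖ = (n : ℝ) + m := by
        rw [← Nat.cast_add, Complex.norm_natCast, Nat.cast_add]
      simp [Umat_mulVec_aux, Fintype.sum_sum_type, e]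
      ring
end

section
/- The smallest nonzero singular value of U equals min{√m, √n}: for every z ∈ ℂ^{m+n} with 1_{m+n}ᵀ z = 0 (i.e., z orthogonal to the kernel of U), one has ‖Uz‖₂ ≥ min{√m, √n}·‖z‖₂. -/
open Matrix

/-- The smallest nonzero singular value of `U` equals `min{√m, √n}`: for every
`z` orthogonal to the kernel of `U` (i.e. with `1_{m+n}ᵀ z = 0`) one has
`‖Uz‖₂ ≥ min{√m, √n}·‖z‖₂`. -/
theorem smallest_nonzero_singular_value_U (m n : ℕ) (hm : 0 < m) (hn : 0 < n) :
    ∀ z : Fin m ⊕ Fin n → ℂ, (∑ q, z q) = 0 →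
      min (Real.sqrt m) (Real.sqrt n) * Real.sqrt (∑ q, ‖z q‖ ^ 2) ≤
        Real.sqrt (∑ p, ‖(Umat m n).mulVec z p‖ ^ 2) := by
  intro z hz
  have hU : ∀ p : Fin m × Fin n,
      (Umat m n).mulVec z p = z (Sum.inl p.1) - z (Sum.inr p.2) := by
    intro p
    simp [Umat, Matrix.mulVec, dotProduct, Fintype.sum_sum_type, sub_eq_add_neg]
  have key : ∀ a b : ℂ, ‖a - b‖ ^ 2 = ‖a‖ ^ 2 + ‖b‖ ^ 2 - 2 * (a.re * b.re + a.im * b.im) := by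
    intro a b
    simp only [← Complex.normSq_eq_norm_sq, Complex.normSq_apply, Complex.sub_re, Complex.sub_im]
    ring
  rw [Fintype.sum_sum_type] at hz
  have hre := congrArg Complex.re hz
  have him := congrArg Complex.im hz
  simp only [Complex.add_re, Complex.add_im, Complex.re_sum, Complex.im_sum, Complex.zero_re,
    Complex.zero_im] at hre him
  have hsum : ∑ p, ‖(Umat m n).mulVec z p‖ ^ 2 =
      n * ∑ i, ‖z (Sum.inl i)‖ ^ 2 + m * ∑ j, ‖z (Sum.inr j)‖ ^ 2
      - 2 * ((∑ i, (z (Sum.inl i)).re) * (∑ j, (z (Sum.inr j)).re)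
        + (∑ i, (z (Sum.inl i)).im) * (∑ j, (z (Sum.inr j)).im)) := by
    simp only [hU, key, Fintype.sum_prod_type, Finset.sum_sub_distrib, Finset.sum_add_distrib,
      ← Finset.mul_sum, Finset.sum_const, Finset.card_univ, Fintype.card_fin, nsmul_eq_mul,
      ← Finset.sum_mul]
  apply Real.le_sqrt_of_sq_le
  have hS : 0 ≤ ∑ i, ‖z (Sum.inl i)‖ ^ 2 := Finset.sum_nonneg fun _ _ => by positivity
  have hT : 0 ≤ ∑ j, ‖z (Sum.inr j)‖ ^ 2 := Finset.sum_nonneg fun _ _ => by positivity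
  rw [hsum, Fintype.sum_sum_type, mul_pow, Real.sq_sqrt (by positivity)]
  have h0 : 0 ≤ min (Real.sqrt m) (Real.sqrt n) := by positivity
  have h1 : min (Real.sqrt m) (Real.sqrt n) ^ 2 ≤ m := by
    calc _ ≤ Real.sqrt m ^ 2 := pow_le_pow_left₀ h0 (min_le_left _ _) 2
      _ = m := Real.sq_sqrt (by positivity)
  have h2 : min (Real.sqrt m) (Real.sqrt n) ^ 2 ≤ n := by
    calc _ ≤ Real.sqrt n ^ 2 := pow_le_pow_left₀ h0 (min_le_right _ _) 2
      _ = n := Real.sq_sqrt (by positivity)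
  have e1 := mul_le_mul_of_nonneg_right h2 hS
  have e2 := mul_le_mul_of_nonneg_right h1 hT
  rw [eq_neg_of_add_eq_zero_right hre, eq_neg_of_add_eq_zero_right him]
  nlinarith [sq_nonneg (∑ i, (z (Sum.inl i)).re), sq_nonneg (∑ i, (z (Sum.inl i)).im)]
end

section
/- Least squares optimality of the explicit solution: let A = [a_{ij}] ∈ ℂ^{m,n} have all entries nonzero, and define r ∈ ℂ^m by r_i = (1/n)∑_j 1/a_{ij}, c ∈ ℂ^n by c_j = (1/m)∑_i 1/a_{ij}, and σ = (1/(mn))∑_{i,j} 1/a_{ij}. Set ŝ = r − (mσ/(m+n))·1_m and t̂ = −c + (nσ/(m+n))·1_n. Then for all s ∈ ℂ^m, t ∈ ℂ^n, one has ∑_{i,j} |ŝ_i − t̂_j − 1/a_{ij}|² ≤ ∑_{i,j} |s_i − t_j − 1/a_{ij}|². -/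
/-- Least squares optimality of the explicit solution: with `r, c, σ` the row,
column and overall means of `A^{[-1]}`, the vectors `ŝ = r − (mσ/(m+n))·1_m`,
`t̂ = −c + (nσ/(m+n))·1_n` minimize `∑_{i,j} |s_i − t_j − 1/a_{ij}|²`. -/
theorem least_squares_optimality (m n : ℕ) (hm : 0 < m) (hn : 0 < n)
    (A : Matrix (Fin m) (Fin n) ℂ) (hA : ∀ i j, A i j ≠ 0)
    (r : Fin m → ℂ) (hr : ∀ i, r i = (n : ℂ)⁻¹ * ∑ j, (A i j)⁻¹)
    (c : Fin n → ℂ) (hc : ∀ j, c j = (m : ℂ)⁻¹ * ∑ i, (A i j)⁻¹)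
    (σ : ℂ) (hσ : σ = ((m : ℂ) * n)⁻¹ * ∑ i, ∑ j, (A i j)⁻¹)
    (sh : Fin m → ℂ) (hsh : ∀ i, sh i = r i - (m : ℂ) * σ / ((m : ℂ) + n))
    (th : Fin n → ℂ) (hth : ∀ j, th j = -c j + (n : ℂ) * σ / ((m : ℂ) + n)) :
    ∀ (s : Fin m → ℂ) (t : Fin n → ℂ),
      ∑ i, ∑ j, ‖sh i - th j - (A i j)⁻¹‖ ^ 2 ≤
        ∑ i, ∑ j, ‖s i - t j - (A i j)⁻¹‖ ^ 2 := by
  intro s t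
  have hm' : (m : ℂ) ≠ 0 := by exact_mod_cast hm.ne'
  have hn' : (n : ℂ) ≠ 0 := by exact_mod_cast hn.ne'
  have hmn : (m : ℂ) + n ≠ 0 := by exact_mod_cast (by omega : m + n ≠ 0)
  have he : ∀ i j, sh i - th j - (A i j)⁻¹ = r i + c j - σ - (A i j)⁻¹ := by
    intro i j
    rw [hsh, hth]
    field_simp
    ring
  have hS1 : ∑ i, r i = m * σ := by
    simp only [hr, ← Finset.mul_sum]
    rw [hσ]
    field_simp
  have hS2 : ∑ j, c j = n * σ := by
    simp only [hc, ← Finset.mul_sum]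
    rw [hσ, Finset.sum_comm]
    field_simp
  have hrow : ∀ i, ∑ j, (sh i - th j - (A i j)⁻¹) = 0 := by
    intro i
    have h1 : ∑ j, (A i j)⁻¹ = n * r i := by
      rw [hr]
      field_simp
    simp only [he, Finset.sum_sub_distrib, Finset.sum_add_distrib, hS2, h1]
    simp
  have hcol : ∀ j, ∑ i, (sh i - th j - (A i j)⁻¹) = 0 := by
    intro j
    have h1 : ∑ i, (A i j)⁻¹ = m * c j := by
      rw [hc]
      field_simp
    simp only [he, Finset.sum_sub_distrib, Finset.sum_add_distrib, hS1, h1]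
    simp
  generalize hE : (fun i j => sh i - th j - (A i j)⁻¹) = e
  have hE' : ∀ i j, sh i - th j - (A i j)⁻¹ = e i j := fun i j => by rw [← hE]
  simp only [hE'] at hrow hcol ⊢
  have hcross : ∑ i, ∑ j, e i j * (starRingEnd ℂ) ((s i - sh i) - (t j - th j)) = 0 := by
    simp only [map_sub (starRingEnd ℂ) (_ - _) (_ - _), mul_sub (e _ _),
      Finset.sum_sub_distrib]
    rw [Finset.sum_comm (f := fun i j => e i j * (starRingEnd ℂ) (t j - th j))]
    simp only [← Finset.sum_mul, hrow, hcol]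
    simp
  have key : ∀ i j, ‖e i j‖ ^ 2
      + 2 * (e i j * (starRingEnd ℂ) ((s i - sh i) - (t j - th j))).re
      ≤ ‖s i - t j - (A i j)⁻¹‖ ^ 2 := by
    intro i j
    have h1 : s i - t j - (A i j)⁻¹ = e i j + ((s i - sh i) - (t j - th j)) := by
      rw [← hE']
      ring
    rw [h1]
    generalize (s i - sh i) - (t j - th j) = d
    rw [Complex.sq_norm, Complex.sq_norm, Complex.normSq_add]
    linarith [Complex.normSq_nonneg d]
  have h2 := Finset.sum_le_sum (s := Finset.univ) fun i _ =>
    Finset.sum_le_sum (s := Finset.univ) fun j _ => key i j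
  have h3 := congrArg Complex.re hcross
  simp only [Complex.re_sum, Complex.zero_re] at h3
  simp only [Finset.sum_add_distrib, ← Finset.mul_sum, h3] at h2
  linarith
end

section
/- Minimum-norm property of the explicit least squares solution: let A = [a_{ij}] ∈ ℂ^{m,n} have all entries nonzero, and define r ∈ ℂ^m by r_i = (1/n)∑_j 1/a_{ij}, c ∈ ℂ^n by c_j = (1/m)∑_i 1/a_{ij}, and σ = (1/(mn))∑_{i,j} 1/a_{ij}. Set ŝ = r − (mσ/(m+n))·1_m and t̂ = −c + (nσ/(m+n))·1_n. Then ∑_i ŝ_i + ∑_j t̂_j = 0, and for every other minimizer (s,t) of ∑_{i,j} |s_i − t_j − 1/a_{ij}|², one has ‖[ŝ; t̂]‖₂ ≤ ‖[s; t]‖₂. -/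
/-- Minimum-norm property of the explicit least squares solution: the explicit
solution `ŝ, t̂` satisfies `∑ ŝ_i + ∑ t̂_j = 0`, and among all minimizers of
`∑_{i,j} |s_i − t_j − 1/a_{ij}|²` it has the least Euclidean norm. -/
theorem least_squares_min_norm (m n : ℕ) (hm : 0 < m) (hn : 0 < n)
    (A : Matrix (Fin m) (Fin n) ℂ) (hA : ∀ i j, A i j ≠ 0)
    (r : Fin m → ℂ) (hr : ∀ i, r i = (n : ℂ)⁻¹ * ∑ j, (A i j)⁻¹)
    (c : Fin n → ℂ) (hc : ∀ j, c j = (m : ℂ)⁻¹ * ∑ i, (A i j)⁻¹)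
    (σ : ℂ) (hσ : σ = ((m : ℂ) * n)⁻¹ * ∑ i, ∑ j, (A i j)⁻¹)
    (sh : Fin m → ℂ) (hsh : ∀ i, sh i = r i - (m : ℂ) * σ / ((m : ℂ) + n))
    (th : Fin n → ℂ) (hth : ∀ j, th j = -c j + (n : ℂ) * σ / ((m : ℂ) + n)) :
    ((∑ i, sh i) + ∑ j, th j = 0) ∧
    ∀ (s : Fin m → ℂ) (t : Fin n → ℂ),
      (∀ (s' : Fin m → ℂ) (t' : Fin n → ℂ),
        ∑ i, ∑ j, ‖s i - t j - (A i j)⁻¹‖ ^ 2 ≤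
          ∑ i, ∑ j, ‖s' i - t' j - (A i j)⁻¹‖ ^ 2) →
      Real.sqrt ((∑ i, ‖sh i‖ ^ 2) + ∑ j, ‖th j‖ ^ 2) ≤
        Real.sqrt ((∑ i, ‖s i‖ ^ 2) + ∑ j, ‖t j‖ ^ 2) := by
  have hm' : (m : ℂ) ≠ 0 := by exact_mod_cast hm.ne'
  have hn' : (n : ℂ) ≠ 0 := by exact_mod_cast hn.ne'
  have hmn : (m : ℂ) + n ≠ 0 := by exact_mod_cast (by omega : m + n ≠ 0)
  have hb : ∑ i, ∑ j, (A i j)⁻¹ = (m : ℂ) * n * σ := by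
    rw [hσ]; field_simp
  have hbr : ∀ i, ∑ j, (A i j)⁻¹ = n * r i := by
    intro i; rw [hr]; field_simp
  have hbc : ∀ j, ∑ i, (A i j)⁻¹ = m * c j := by
    intro j; rw [hc]; field_simp
  have hsr : ∑ i, r i = m * σ := by
    have h1 := hb
    simp only [hbr, ← Finset.mul_sum] at h1
    apply mul_left_cancel₀ hn'
    rw [h1]; ring
  have hsc : ∑ j, c j = n * σ := by
    have h1 := hb
    rw [Finset.sum_comm] at h1
    simp only [hbc, ← Finset.mul_sum] at h1
    apply mul_left_cancel₀ hm'
    rw [h1]; ring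
  have hss : ∑ i, sh i = m * n * σ / (m + n) := by
    simp only [hsh, Finset.sum_sub_distrib, hsr, Finset.sum_const, Finset.card_univ,
      Fintype.card_fin, nsmul_eq_mul]
    field_simp
    ring
  have hst : ∑ j, th j = - (m * n * σ / (m + n)) := by
    simp only [hth, Finset.sum_add_distrib, Finset.sum_neg_distrib, hsc, Finset.sum_const,
      Finset.card_univ, Fintype.card_fin, nsmul_eq_mul]
    field_simp
    ring
  have h0 : (∑ i, sh i) + ∑ j, th j = 0 := by rw [hss, hst]; ring
  refine ⟨h0, ?_⟩
  intro s t hmin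
  have hrow : ∀ i, ∑ j, (sh i - th j - (A i j)⁻¹) = 0 := by
    intro i
    simp only [Finset.sum_sub_distrib, hst, hbr, Finset.sum_const,
      Finset.card_univ, Fintype.card_fin, nsmul_eq_mul, hsh]
    field_simp
    ring
  have hcol : ∀ j, ∑ i, (sh i - th j - (A i j)⁻¹) = 0 := by
    intro j
    simp only [Finset.sum_sub_distrib, hss, hbc, Finset.sum_const,
      Finset.card_univ, Fintype.card_fin, nsmul_eq_mul, hth]
    field_simp
    ring
  have hcross : ∑ i, ∑ j, (sh i - th j - (A i j)⁻¹) *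
      (starRingEnd ℂ) ((s i - sh i) - (t j - th j)) = 0 := by
    have e1 : ∑ i, ∑ j, (sh i - th j - (A i j)⁻¹) * (starRingEnd ℂ) (s i - sh i) = 0 := by
      simp only [← Finset.sum_mul, hrow, zero_mul, Finset.sum_const_zero]
    have e2 : ∑ i, ∑ j, (sh i - th j - (A i j)⁻¹) * (starRingEnd ℂ) (t j - th j) = 0 := by
      rw [Finset.sum_comm]
      simp only [← Finset.sum_mul, hcol, zero_mul, Finset.sum_const_zero]
    rw [← sub_zero (0 : ℂ)]
    nth_rewrite 1 [← e1]
    rw [← e2, ← Finset.sum_sub_distrib]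
    refine Finset.sum_congr rfl fun i _ => ?_
    rw [← Finset.sum_sub_distrib]
    refine Finset.sum_congr rfl fun j _ => ?_
    rw [map_sub (starRingEnd ℂ) (s i - sh i), mul_sub]
  have hexp : ∑ i, ∑ j, ‖s i - t j - (A i j)⁻¹‖ ^ 2 =
      ∑ i, ∑ j, ‖sh i - th j - (A i j)⁻¹‖ ^ 2 +
      ∑ i, ∑ j, ‖(s i - sh i) - (t j - th j)‖ ^ 2 := by
    have e : ∀ i j, ‖s i - t j - (A i j)⁻¹‖ ^ 2 = ‖sh i - th j - (A i j)⁻¹‖ ^ 2 +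
        ‖(s i - sh i) - (t j - th j)‖ ^ 2 + 2 * ((sh i - th j - (A i j)⁻¹) *
      (starRingEnd ℂ) ((s i - sh i) - (t j - th j))).re := by
      intro i j
      rw [Complex.sq_norm, Complex.sq_norm, Complex.sq_norm, ← Complex.normSq_add]
      congr 1; ring
    simp only [e, Finset.sum_add_distrib, ← Finset.mul_sum, ← Complex.re_sum, hcross]
    simp
  have hle := hmin sh th
  rw [hexp] at hle
  have hz : ∑ i, ∑ j, ‖(s i - sh i) - (t j - th j)‖ ^ 2 = 0 :=
    le_antisymm (by linarith) (by positivity)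
  have hz2 : ∀ i j, s i - sh i = t j - th j := by
    intro i j
    rw [Finset.sum_eq_zero_iff_of_nonneg (fun _ _ => by positivity)] at hz
    have h1 := hz i (Finset.mem_univ _)
    rw [Finset.sum_eq_zero_iff_of_nonneg (fun _ _ => by positivity)] at h1
    have h2 := h1 j (Finset.mem_univ _)
    exact sub_eq_zero.mp (norm_eq_zero.mp (pow_eq_zero_iff (two_ne_zero) |>.mp h2))
  obtain ⟨k, hk⟩ : ∃ k, k = s ⟨0, hm⟩ - sh ⟨0, hm⟩ := ⟨_, rfl⟩
  have ht : ∀ j, t j = th j + k := by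
    intro j; rw [hk, hz2 _ j]; ring
  have hs : ∀ i, s i = sh i + k := by
    intro i
    have h1 := hz2 i ⟨0, hn⟩
    rw [ht] at h1
    linear_combination h1
  apply Real.sqrt_le_sqrt
  have h0' : (∑ i, (sh i * (starRingEnd ℂ) k).re) + ∑ j, (th j * (starRingEnd ℂ) k).re = 0 := by
    rw [← Complex.re_sum, ← Complex.re_sum, ← Complex.add_re, ← Finset.sum_mul,
      ← Finset.sum_mul, ← add_mul, h0]
    simp
  simp only [hs, ht, Complex.sq_norm, Complex.normSq_add, Finset.sum_add_distrib,
    ← Finset.mul_sum]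
  have p1 : 0 ≤ ∑ _i : Fin m, Complex.normSq k :=
    Finset.sum_nonneg fun _ _ => Complex.normSq_nonneg _
  have p2 : 0 ≤ ∑ _i : Fin n, Complex.normSq k :=
    Finset.sum_nonneg fun _ _ => Complex.normSq_nonneg _
  linarith
end

section
/- Lower bound on point separation from a small linearization residual: let A = [a_{ij}] ∈ ℂ^{m,n} have all entries nonzero, let s ∈ ℂ^m, t ∈ ℂ^n, and let R = [r_{ij}] with r_{ij} = 1/a_{ij} − (s_i − t_j). If β := max_{i,j} |a_{ij} r_{ij}| < 1, then |s_i − t_j| ≥ (1 − β)/max_{k,l}|a_{kl}| for all i, j; in particular s, t are Cauchy points. -/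
/-- Lower bound on point separation from a small linearization residual: if
`β := max_{i,j} |a_{ij} r_{ij}| < 1` where `r_{ij} = 1/a_{ij} − (s_i − t_j)`,
then `|s_i − t_j| ≥ (1 − β)/max_{k,l}|a_{kl}|` for all `i, j`; in particular
`s, t` are Cauchy points. -/
theorem separation_lower_bound (m n : ℕ) (hm : 0 < m) (hn : 0 < n)
    (A : Matrix (Fin m) (Fin n) ℂ) (hA : ∀ i j, A i j ≠ 0)
    (s : Fin m → ℂ) (t : Fin n → ℂ)
    (R : Matrix (Fin m) (Fin n) ℂ) (hR : ∀ i j, R i j = (A i j)⁻¹ - (s i - t j))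
    (β : ℝ)
    (hβ : β = Finset.univ.sup' ⟨(⟨0, hm⟩, ⟨0, hn⟩), Finset.mem_univ _⟩
      (fun p : Fin m × Fin n => ‖A p.1 p.2 * R p.1 p.2‖))
    (hβ1 : β < 1) :
    (∀ i j, (1 - β) / (Finset.univ.sup' ⟨(⟨0, hm⟩, ⟨0, hn⟩), Finset.mem_univ _⟩
        (fun p : Fin m × Fin n => ‖A p.1 p.2‖)) ≤
      ‖s i - t j‖) ∧
    ∀ i j, s i - t j ≠ 0 := by
  have key : ∀ i j, 1 - β ≤ ‖A i j‖ * ‖s i - t j‖ := by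
    intro i j
    have h1 : ‖A i j * R i j‖ ≤ β := by
      rw [hβ]
      exact Finset.le_sup' (fun p : Fin m × Fin n => ‖A p.1 p.2 * R p.1 p.2‖)
        (Finset.mem_univ (i, j))
    have h2 : (1 : ℂ) = A i j * R i j + A i j * (s i - t j) := by
      rw [hR, mul_sub, mul_inv_cancel₀ (hA i j)]
      ring
    have h3 : ‖(1 : ℂ)‖ ≤ ‖A i j * R i j‖ + ‖A i j * (s i - t j)‖ := by
      conv_lhs => rw [h2]
      exact norm_add_le _ _
    rw [norm_one, norm_mul (A i j) (s i - t j)] at h3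
    linarith
  constructor
  · intro i j
    have h4 : ‖A i j‖ ≤ Finset.univ.sup' ⟨(⟨0, hm⟩, ⟨0, hn⟩), Finset.mem_univ _⟩
        (fun p : Fin m × Fin n => ‖A p.1 p.2‖) :=
      Finset.le_sup' (fun p : Fin m × Fin n => ‖A p.1 p.2‖) (Finset.mem_univ (i, j))
    have h5 : 0 < ‖A i j‖ := norm_pos_iff.mpr (hA i j)
    rw [div_le_iff₀ (lt_of_lt_of_le h5 h4), mul_comm]
    exact (key i j).trans (mul_le_mul_of_nonneg_right h4 (norm_nonneg _))
  · intro i j h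
    have := key i j
    rw [h, norm_zero, mul_zero] at this
    linarith
end

section
/- Residual bound for the linearized Cauchy approximation: let A = [a_{ij}] ∈ ℂ^{m,n} have all entries nonzero, let s ∈ ℂ^m, t ∈ ℂ^n, and let R = [r_{ij}] with r_{ij} = 1/a_{ij} − (s_i − t_j). If β := max_{i,j} |a_{ij} r_{ij}| < 1, then s, t are Cauchy points and ‖A − C(s,t)‖_F ≤ (β/(1−β))·‖A‖_F, i.e., (∑_{i,j} |a_{ij} − 1/(s_i − t_j)|²)^{1/2} ≤ (β/(1−β))·(∑_{i,j}|a_{ij}|²)^{1/2}. -/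
/-- Residual bound for the linearized Cauchy approximation: if
`β := max_{i,j} |a_{ij} r_{ij}| < 1` where `r_{ij} = 1/a_{ij} − (s_i − t_j)`,
then `s, t` are Cauchy points and `‖A − C(s,t)‖_F ≤ (β/(1−β))·‖A‖_F`. -/
theorem residual_bound (m n : ℕ) (hm : 0 < m) (hn : 0 < n)
    (A : Matrix (Fin m) (Fin n) ℂ) (hA : ∀ i j, A i j ≠ 0)
    (s : Fin m → ℂ) (t : Fin n → ℂ)
    (R : Matrix (Fin m) (Fin n) ℂ) (hR : ∀ i j, R i j = (A i j)⁻¹ - (s i - t j))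
    (β : ℝ)
    (hβ : β = Finset.univ.sup' ⟨(⟨0, hm⟩, ⟨0, hn⟩), Finset.mem_univ _⟩
      (fun p : Fin m × Fin n => ‖A p.1 p.2 * R p.1 p.2‖))
    (hβ1 : β < 1) :
    (∀ i j, s i - t j ≠ 0) ∧
    Real.sqrt (∑ i, ∑ j, ‖A i j - (s i - t j)⁻¹‖ ^ 2) ≤
      β / (1 - β) * Real.sqrt (∑ i, ∑ j, ‖A i j‖ ^ 2) := by
  have key : ∀ i j, ‖1 - A i j * (s i - t j)‖ ≤ β := by
    intro i j
    have h1 : ‖A i j * R i j‖ ≤ β := by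
      rw [hβ]
      exact Finset.le_sup' (fun p : Fin m × Fin n => ‖A p.1 p.2 * R p.1 p.2‖)
        (Finset.mem_univ (i, j))
    rwa [hR, mul_sub, mul_inv_cancel₀ (hA i j)] at h1
  have hβ0 : 0 ≤ β := (norm_nonneg _).trans (key ⟨0, hm⟩ ⟨0, hn⟩)
  have hpos : 0 < 1 - β := by linarith
  have hd : ∀ i j, s i - t j ≠ 0 := by
    intro i j h
    have h1 := key i j
    rw [h] at h1
    simp at h1
    linarith
  have hb : ∀ i j, ‖A i j - (s i - t j)⁻¹‖ ≤ β / (1 - β) * ‖A i j‖ := by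
    intro i j
    have h1 := key i j
    have hdp : 0 < ‖s i - t j‖ := norm_pos_iff.mpr (hd i j)
    have h2 : 1 - β ≤ ‖A i j‖ * ‖s i - t j‖ := by
      have h3 := norm_sub_norm_le (1 : ℂ) (1 - (1 - A i j * (s i - t j)))
      rw [sub_sub_cancel, norm_mul, norm_one] at h3
      linarith
    have h4 : ‖A i j - (s i - t j)⁻¹‖ * ‖s i - t j‖ ≤ β := by
      rw [← norm_mul, sub_mul, inv_mul_cancel₀ (hd i j), norm_sub_rev]
      exact h1
    have h5 : ‖A i j - (s i - t j)⁻¹‖ ≤ β / ‖s i - t j‖ := (le_div_iff₀ hdp).mpr h4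
    refine h5.trans ?_
    rw [div_mul_eq_mul_div, div_le_div_iff₀ hdp hpos, mul_assoc]
    exact mul_le_mul_of_nonneg_left h2 hβ0
  refine ⟨hd, ?_⟩
  have hc : 0 ≤ β / (1 - β) := div_nonneg hβ0 hpos.le
  rw [← Real.sqrt_sq hc, ← Real.sqrt_mul (sq_nonneg _)]
  apply Real.sqrt_le_sqrt
  simp only [Finset.mul_sum, ← mul_pow]
  exact Finset.sum_le_sum fun i _ => Finset.sum_le_sum fun j _ =>
    pow_le_pow_left₀ (norm_nonneg _) (hb i j) 2
end

section
/- Recovery of Cauchy points from a noisy Cauchy matrix: let s̃ ∈ ℂ^m, t̃ ∈ ℂ^n be Cauchy points with ∑_i s̃_i + ∑_j t̃_j = 0 (normalized Cauchy points), let N = [n_{ij}] ∈ ℂ^{m,n}, and suppose A = C(s̃,t̃) + N has all entries nonzero. Define r ∈ ℂ^m by r_i = (1/n)∑_j 1/a_{ij}, c ∈ ℂ^n by c_j = (1/m)∑_i 1/a_{ij}, σ = (1/(mn))∑_{i,j} 1/a_{ij}, and set ŝ = r − (mσ/(m+n))·1_m, t̂ = −c + (nσ/(m+n))·1_n. If γ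 := max_{i,j} |(s̃_i − t̃_j)·n_{ij}| < 1, then ‖[s̃; t̃] − [ŝ; t̂]‖₂ ≤ (√(m+n)/min{√m, √n}) · (γ/(1−γ)) · ‖[s̃; t̃]‖₂. -/
lemma nr_id (m n : ℕ) (x : Fin m → ℂ) (y : Fin n → ℂ) (h : (∑ i, x i) + ∑ j, y j = 0) :
    ∑ i, ∑ j, ‖x i - y j‖ ^ 2 =
      n * ∑ i, ‖x i‖ ^ 2 + m * ∑ j, ‖y j‖ ^ 2 + 2 * ‖∑ i, x i‖ ^ 2 := by
  have h2 : ∑ i, ∑ j, (x i * (starRingEnd ℂ) (y j)).re = - ‖∑ i, x i‖ ^ 2 := by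
    have : ∑ j, y j = - ∑ i, x i := by linear_combination h
    have e : ∑ i, ∑ j, (x i * (starRingEnd ℂ) (y j)).re
        = ((∑ i, x i) * (starRingEnd ℂ) (∑ j, y j)).re := by
      rw [map_sum, Finset.sum_mul_sum, Complex.re_sum]
      simp only [Complex.re_sum]
    rw [e, this, map_neg, mul_neg, Complex.mul_conj, Complex.neg_re, Complex.ofReal_re,
      Complex.normSq_eq_norm_sq]
  simp only [← Complex.normSq_eq_norm_sq, Complex.normSq_sub] at *
  simp only [Finset.sum_sub_distrib, Finset.sum_add_distrib, ← Finset.mul_sum, h2,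
    Finset.sum_const, Finset.card_univ, Fintype.card_fin, nsmul_eq_mul]
  ring

lemma nr_pyth (m n : ℕ) (x : Fin m → ℂ) (y : Fin n → ℂ) (w : Fin m → Fin n → ℂ)
    (h1 : ∀ i, ∑ j, w i j = 0) (h2 : ∀ j, ∑ i, w i j = 0) :
    ∑ i, ∑ j, ‖x i - y j‖ ^ 2 ≤ ∑ i, ∑ j, ‖(x i - y j) + w i j‖ ^ 2 := by
  have h3 : ∑ i, ∑ j, ((x i - y j) * (starRingEnd ℂ) (w i j)).re = 0 := by
    simp only [sub_mul, Complex.sub_re, Finset.sum_sub_distrib]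
    have a : ∀ i, ∑ j, (x i * (starRingEnd ℂ) (w i j)).re = 0 := by
      intro i
      rw [← Complex.re_sum, ← Finset.mul_sum, ← map_sum, h1]; simp
    have b : ∀ j, ∑ i, (y j * (starRingEnd ℂ) (w i j)).re = 0 := by
      intro i
      rw [← Complex.re_sum, ← Finset.mul_sum, ← map_sum, h2]; simp
    rw [Finset.sum_comm (f := fun i j => (y j * (starRingEnd ℂ) (w i j)).re)]
    simp [a, b, -Complex.mul_re]
  simp only [← Complex.normSq_eq_norm_sq]
  have : ∀ i j, Complex.normSq (x i - y j + w i j) = Complex.normSq (x i - y j)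
      + Complex.normSq (w i j) + 2 * ((x i - y j) * (starRingEnd ℂ) (w i j)).re :=
    fun i j => Complex.normSq_add _ _
  simp only [this, Finset.sum_add_distrib, ← Finset.mul_sum, h3]
  have : 0 ≤ ∑ i, ∑ j, Complex.normSq (w i j) :=
    Finset.sum_nonneg fun i _ => Finset.sum_nonneg fun j _ => Complex.normSq_nonneg _
  linarith

lemma nr_cs (m : ℕ) (x : Fin m → ℂ) : ‖∑ i, x i‖ ^ 2 ≤ m * ∑ i, ‖x i‖ ^ 2 := by
  calc ‖∑ i, x i‖ ^ 2 ≤ (∑ i, ‖x i‖) ^ 2 := by gcongr; exact norm_sum_le _ _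
    _ ≤ _ := by simpa using sq_sum_le_card_mul_sum_sq (s := Finset.univ) (f := fun i => ‖x i‖)


/-- Recovery of Cauchy points from a noisy Cauchy matrix: if `s̃, t̃` are
normalized Cauchy points, `A = C(s̃,t̃) + N` has all entries nonzero, `ŝ, t̂`
is the explicit minimum-norm least squares solution computed from `A`, and
`γ := max_{i,j} |(s̃_i − t̃_j)·n_{ij}| < 1`, then
`‖[s̃; t̃] − [ŝ; t̂]‖₂ ≤ (√(m+n)/min{√m,√n})·(γ/(1−γ))·‖[s̃; t̃]‖₂`. -/
theorem noisy_recovery (m n : ℕ) (hm : 0 < m) (hn : 0 < n)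
    (st : Fin m → ℂ) (tt : Fin n → ℂ)
    (hct : ∀ i j, st i - tt j ≠ 0)
    (hnorm : (∑ i, st i) + ∑ j, tt j = 0)
    (N : Matrix (Fin m) (Fin n) ℂ)
    (A : Matrix (Fin m) (Fin n) ℂ)
    (hAdef : ∀ i j, A i j = (st i - tt j)⁻¹ + N i j)
    (hA : ∀ i j, A i j ≠ 0)
    (r : Fin m → ℂ) (hr : ∀ i, r i = (n : ℂ)⁻¹ * ∑ j, (A i j)⁻¹)
    (c : Fin n → ℂ) (hc : ∀ j, c j = (m : ℂ)⁻¹ * ∑ i, (A i j)⁻¹)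
    (σ : ℂ) (hσ : σ = ((m : ℂ) * n)⁻¹ * ∑ i, ∑ j, (A i j)⁻¹)
    (sh : Fin m → ℂ) (hsh : ∀ i, sh i = r i - (m : ℂ) * σ / ((m : ℂ) + n))
    (th : Fin n → ℂ) (hth : ∀ j, th j = -c j + (n : ℂ) * σ / ((m : ℂ) + n))
    (γ : ℝ)
    (hγ : γ = Finset.univ.sup' ⟨(⟨0, hm⟩, ⟨0, hn⟩), Finset.mem_univ _⟩
      (fun p : Fin m × Fin n => ‖(st p.1 - tt p.2) * N p.1 p.2‖))
    (hγ1 : γ < 1) :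
    Real.sqrt ((∑ i, ‖st i - sh i‖ ^ 2) +
        ∑ j, ‖tt j - th j‖ ^ 2) ≤
      Real.sqrt (m + n) / min (Real.sqrt m) (Real.sqrt n) * (γ / (1 - γ)) *
        Real.sqrt ((∑ i, ‖st i‖ ^ 2) +
          ∑ j, ‖tt j‖ ^ 2) := by
  have hm' : (m : ℂ) ≠ 0 := by exact_mod_cast hm.ne'
  have hn' : (n : ℂ) ≠ 0 := by exact_mod_cast hn.ne'
  have hmn' : (m : ℂ) + n ≠ 0 := by exact_mod_cast (by omega : m + n ≠ 0)
  have hle : ∀ i j, ‖(st i - tt j) * N i j‖ ≤ γ := by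
    intro i j
    rw [hγ]
    exact Finset.le_sup' (fun p : Fin m × Fin n => ‖(st p.1 - tt p.2) * N p.1 p.2‖)
      (Finset.mem_univ (i, j))
  have hγ0 : 0 ≤ γ := (norm_nonneg _).trans (hle ⟨0, hm⟩ ⟨0, hn⟩)
  have h1γ : 0 < 1 - γ := by linarith
  have hrow : ∀ i, ∑ j, (A i j)⁻¹ = n * r i := by
    intro i; rw [hr]; field_simp
  have hcol : ∀ j, ∑ i, (A i j)⁻¹ = m * c j := by
    intro i; rw [hc]; field_simp
  have htot : ∑ i, ∑ j, (A i j)⁻¹ = m * n * σ := by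
    rw [hσ]; field_simp
  have hrs : ∑ i, r i = m * σ := by
    have : (n : ℂ) * ∑ i, r i = n * (m * σ) := by
      rw [Finset.mul_sum, ← Finset.sum_congr rfl (fun i _ => hrow i), htot]; ring
    exact mul_left_cancel₀ hn' this
  have hcs : ∑ j, c j = n * σ := by
    have : (m : ℂ) * ∑ i, c i = m * (n * σ) := by
      rw [Finset.mul_sum, ← Finset.sum_congr rfl (fun i _ => hcol i), Finset.sum_comm, htot]; ring
    exact mul_left_cancel₀ hm' this
  have hshs : ∑ i, sh i = m * n * σ / (m + n) := by
    simp only [hsh, Finset.sum_sub_distrib, hrs, Finset.sum_const, Finset.card_univ,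
      Fintype.card_fin, nsmul_eq_mul]
    field_simp; ring
  have hths : ∑ j, th j = - (m * n * σ / (m + n)) := by
    simp only [hth, Finset.sum_add_distrib, Finset.sum_neg_distrib, hcs, Finset.sum_const,
      Finset.card_univ, Fintype.card_fin, nsmul_eq_mul]
    field_simp; ring
  have hp := nr_pyth m n (fun i => st i - sh i) (fun j => tt j - th j)
    (fun i j => sh i - th j - (A i j)⁻¹)
    (by
      intro i
      simp only [Finset.sum_sub_distrib, hrow, hths, hsh, Finset.sum_const,
        Finset.card_univ, Fintype.card_fin, nsmul_eq_mul]
      field_simp; ring)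
    (by
      intro j
      simp only [Finset.sum_sub_distrib, hcol, hshs, hth, Finset.sum_const,
        Finset.card_univ, Fintype.card_fin, nsmul_eq_mul]
      field_simp; ring)
  have hid1 := nr_id m n (fun i => st i - sh i) (fun j => tt j - th j) (by
    simp only [Finset.sum_sub_distrib, hshs, hths]
    linear_combination hnorm)
  have hid2 := nr_id m n st tt hnorm
  have hent : ∀ i j, ‖(st i - sh i - (tt j - th j)) + (sh i - th j - (A i j)⁻¹)‖ ≤
      γ / (1 - γ) * ‖st i - tt j‖ := by
    intro i j
    have hd := hct i j
    have hA1 : (st i - tt j) * A i j = 1 + (st i - tt j) * N i j := by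
      rw [hAdef]; field_simp
    have e : (st i - sh i - (tt j - th j)) + (sh i - th j - (A i j)⁻¹) =
        (st i - tt j) * ((st i - tt j) * N i j) / ((st i - tt j) * A i j) := by
      have := hA i j
      rw [eq_div_iff (mul_ne_zero hd this)]
      have h5 : (A i j)⁻¹ * A i j = 1 := inv_mul_cancel₀ this
      linear_combination (st i - tt j) * hA1 - (st i - tt j) * h5
    have hl : 1 - γ ≤ ‖(st i - tt j) * A i j‖ := by
      rw [hA1]
      have h6 := norm_sub_le (1 + (st i - tt j) * N i j) ((st i - tt j) * N i j)
      rw [add_sub_cancel_right, norm_one] at h6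
      linarith [hle i j]
    rw [e, norm_div, norm_mul (st i - tt j) (_ * _)]
    calc _ ≤ ‖st i - tt j‖ * γ / (1 - γ) := by
          gcongr
          exact hle i j
      _ = _ := by ring
  set g := γ / (1 - γ) with hg
  have hg0 : 0 ≤ g := by positivity
  have hb : ∑ i, ∑ j, ‖(st i - sh i - (tt j - th j)) + (sh i - th j - (A i j)⁻¹)‖ ^ 2 ≤
      g ^ 2 * ∑ i, ∑ j, ‖st i - tt j‖ ^ 2 := by
    simp only [Finset.mul_sum, ← mul_pow]
    gcongr with i _ j _
    exact hent i j
  have c1 := nr_cs m st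
  have c2 := nr_cs n tt
  have hT : ‖∑ j, tt j‖ = ‖∑ i, st i‖ := by
    rw [show ∑ j, tt j = - ∑ i, st i by linear_combination hnorm, norm_neg]
  rw [hT] at c2
  have hmain : ((min m n : ℕ) : ℝ) * ((∑ i, ‖st i - sh i‖ ^ 2) + ∑ j, ‖tt j - th j‖ ^ 2) ≤
      (m + n) * g ^ 2 * ((∑ i, ‖st i‖ ^ 2) + ∑ j, ‖tt j‖ ^ 2) := by
    have k1 : ((min m n : ℕ) : ℝ) ≤ n := by exact_mod_cast min_le_right m n
    have k2 : ((min m n : ℕ) : ℝ) ≤ m := by exact_mod_cast min_le_left m n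
    have p1 : 0 ≤ ∑ i, ‖st i - sh i‖ ^ 2 := by positivity
    have p2 : 0 ≤ ∑ j, ‖tt j - th j‖ ^ 2 := by positivity
    have q1 := mul_le_mul_of_nonneg_right k1 p1
    have q2 := mul_le_mul_of_nonneg_right k2 p2
    have q3 : 0 ≤ ‖∑ i, (st i - sh i)‖ ^ 2 := by positivity
    have q4 : ∑ i, ∑ j, ‖st i - tt j‖ ^ 2 ≤
      (m + n) * ((∑ i, ‖st i‖ ^ 2) + ∑ j, ‖tt j‖ ^ 2) := by rw [hid2]; linarith
    have q5 := mul_le_mul_of_nonneg_left q4 (sq_nonneg g)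
    linarith
  have hmin : min (Real.sqrt m) (Real.sqrt n) = Real.sqrt ((min m n : ℕ) : ℝ) := by
    rw [Nat.cast_min, Real.sqrt_monotone.map_min]
  have hpos : (0 : ℝ) < ((min m n : ℕ) : ℝ) := by exact_mod_cast lt_min hm hn
  rw [hmin]
  have hs := Real.sqrt_pos.mpr hpos
  rw [div_mul_eq_mul_div, div_mul_eq_mul_div, le_div_iff₀ hs, mul_comm,
    ← Real.sqrt_mul hpos.le]
  have : Real.sqrt (m + n) * g * Real.sqrt ((∑ i, ‖st i‖ ^ 2) + ∑ j, ‖tt j‖ ^ 2) =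
      Real.sqrt ((m + n) * g ^ 2 * ((∑ i, ‖st i‖ ^ 2) + ∑ j, ‖tt j‖ ^ 2)) := by
    rw [Real.sqrt_mul (by positivity), Real.sqrt_mul (by positivity), Real.sqrt_sq hg0]
  rw [this]
  exact Real.sqrt_le_sqrt hmain
end
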